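/- Let X be a countably infinite set and S a subsemigroup of I_X. Suppose there exist a sequence (α_i)_{i∈ω} ∈ X^ω of distinct elements and a sequence of non-empty subsets D_i ⊆ X^i (i ∈ ω) such that: (i) for each i ∈ ω and each (β_0,…,β_i) ∈ D_{i+1}, we have (β_0,…,β_{i−1}) ∈ D_i; (ii) for each i ∈ ω and each (β_0,…,β_{i−1}) ∈ D_i, there exist infinitely many β ∈ X with (β_0,…,β_{i−1},β) ∈ D_{i+1}; and (iii) whenever (β_i)_{i∈ω} ∈ X^ω satisfies (β_0,…,β_{i−1}) ∈ D_i for every i ∈ ω, there exist g, g′ ∈ S such that α_i g = β_i for all i and β_i g′ = α_i for all i (in particular each α_i ∈ dom g and each β_i ∈ dom g′). Then S ≈ I_X. -/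

import Mathlib

open Set Cardinal

universe u

/-- A chart on `X` (an element of the symmetric inverse monoid `I_X`): a partial
bijection between subsets of `X`, encoded as a functional, injective relation,
i.e. a set of pairs. -/
structure Chart (X : Type u) : Type u where
  rel : Set (X × X)
  functional : ∀ ⦃x y y'⦄, (x, y) ∈ rel → (x, y') ∈ rel → y = y'
  injective : ∀ ⦃x x' y⦄, (x, y) ∈ rel → (x', y) ∈ rel → x = x'

namespace Chart

variable {X : Type u}

/-- Composition of charts: compose wherever possible. -/
instance : Mul (Chart X) :=
  ⟨fun f g =>
    { rel := {p | ∃ y, (p.1, y) ∈ f.rel ∧ (y, p.2) ∈ g.rel}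
      functional := by
        rintro x y y' ⟨z, hz1, hz2⟩ ⟨w, hw1, hw2⟩
        obtain rfl : z = w := f.functional hz1 hw1
        exact g.functional hz2 hw2
      injective := by
        rintro x x' y ⟨z, hz1, hz2⟩ ⟨w, hw1, hw2⟩
        obtain rfl : z = w := g.injective hz2 hw2
        exact f.injective hz1 hw1 }⟩

/-- The inverse chart. -/
instance : Inv (Chart X) :=
  ⟨fun f =>
    { rel := {p | (p.2, p.1) ∈ f.rel}
      functional := fun _ _ _ h h' => f.injective h h'
      injective := fun _ _ _ h h' => f.functional h h' }⟩

/-- The domain of a chart. -/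
def dom (f : Chart X) : Set X := {x | ∃ y, (x, y) ∈ f.rel}

/-- The range (image) of a chart. -/
def ran (f : Chart X) : Set X := {y | ∃ x, (x, y) ∈ f.rel}

end Chart

/-- Membership in the subsemigroup of `I_X` generated by a set of charts. -/
inductive InGen {X : Type u} (S : Set (Chart X)) : Chart X → Prop
  | base {f : Chart X} : f ∈ S → InGen S f
  | mul {f g : Chart X} : InGen S f → InGen S g → InGen S (f * g)

/-- The subsemigroup of `I_X` generated by a set of charts. -/
def Sgen {X : Type u} (S : Set (Chart X)) : Set (Chart X) := {f | InGen S f}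

/-- The Bergman–Shelah preorder `S ≼ T` on subsets of `I_X`: there is a countable
subset `U ⊆ I_X` with `S` contained in the subsemigroup generated by `T ∪ U`. -/
def BSleq {X : Type u} (S T : Set (Chart X)) : Prop :=
  ∃ U : Set (Chart X), U.Countable ∧ S ⊆ Sgen (T ∪ U)

/-- Bergman–Shelah equivalence `S ≈ T`. -/
def BSequiv {X : Type u} (S T : Set (Chart X)) : Prop := BSleq S T ∧ BSleq T S

/-- The Bergman–Shelah preorder relative to a cardinal `κ`: `S ≼_κ T` iff there is
`U ⊆ I_X` with `|U| < κ` and `S` contained in the subsemigroup generated by `T ∪ U`. -/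
def BSleqC {X : Type u} (κ : Cardinal.{u}) (S T : Set (Chart X)) : Prop :=
  ∃ U : Set (Chart X), #↥U < κ ∧ S ⊆ Sgen (T ∪ U)

/-- Bergman–Shelah equivalence relative to a cardinal `κ`. -/
def BSequivC {X : Type u} (κ : Cardinal.{u}) (S T : Set (Chart X)) : Prop :=
  BSleqC κ S T ∧ BSleqC κ T S

/-- A chart is a permutation of `X` if it is everywhere defined and surjective. -/
def IsPermChart {X : Type u} (f : Chart X) : Prop :=
  (∀ x : X, ∃ y, (x, y) ∈ f.rel) ∧ ∀ y : X, ∃ x, (x, y) ∈ f.rel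

/-- The partwise stabiliser of a family of subsets of `X`: all permutations of `X`
mapping each member of the family onto itself. -/
def PStab {X : Type u} (P : Set (Set X)) : Set (Chart X) :=
  {f | IsPermChart f ∧ ∀ B ∈ P, {y | ∃ x ∈ B, (x, y) ∈ f.rel} = B}

/-- A subset of `I_X` closed under composition. -/
def IsSubsemigroup {X : Type u} (S : Set (Chart X)) : Prop :=
  ∀ f ∈ S, ∀ g ∈ S, f * g ∈ S

/-- A subsemigroup of `I_X` closed under inversion. -/
def IsInverseSubsemigroup {X : Type u} (S : Set (Chart X)) : Prop :=
  IsSubsemigroup S ∧ ∀ f ∈ S, f⁻¹ ∈ S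

/-- The orbit of a point under a set of charts: `{x} ∪ {xf : f ∈ M, x ∈ dom f}`. -/
def ChartOrbit {X : Type u} (M : Set (Chart X)) (x : X) : Set X :=
  insert x {y | ∃ f ∈ M, (x, y) ∈ f.rel}

/-- The cone of a point under a set of charts: `{xs : s ∈ S, x ∈ dom s}`. -/
def ChartCone {X : Type u} (S : Set (Chart X)) (x : X) : Set X :=
  {y | ∃ f ∈ S, (x, y) ∈ f.rel}

/-- The semilattice of idempotents of `I_X`: the partial identity charts. -/
def EX (X : Type u) : Set (Chart X) := {f | ∀ x y : X, (x, y) ∈ f.rel → y = x}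

/-- A `κ`-uniform partition: every part has cardinality `κ`. -/
def IsUniformPartition {X : Type u} (κ : Cardinal.{u}) (P : Set (Set X)) : Prop :=
  Setoid.IsPartition P ∧ ∀ B ∈ P, #↥B = κ

/-- A `κ`-unbounded partition: all parts have cardinality `< κ` but no cardinal
`c < κ` bounds the cardinalities of all parts. -/
def IsUnboundedPartition {X : Type u} (κ : Cardinal.{u}) (P : Set (Set X)) : Prop :=
  Setoid.IsPartition P ∧ (∀ B ∈ P, #↥B < κ) ∧ ¬∃ c < κ, ∀ B ∈ P, #↥B ≤ c

/-- A `κ`-bounded partition: some cardinal `c < κ` bounds the cardinalities of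
all parts. -/
def IsBoundedPartition {X : Type u} (κ : Cardinal.{u}) (P : Set (Set X)) : Prop :=
  Setoid.IsPartition P ∧ ∃ c < κ, ∀ B ∈ P, #↥B ≤ c

/-- A rooted tree on (a subset of) `X`, encoded via its parent function: every
vertex reaches the root by finitely many applications of `par`. -/
structure RTree (X : Type u) : Type u where
  verts : Set X
  root : X
  root_mem : root ∈ verts
  par : X → X
  par_mem : ∀ x ∈ verts, par x ∈ verts
  par_root : par root = root
  par_reaches : ∀ x ∈ verts, ∃ n : ℕ, par^[n] x = root

namespace RTree

variable {X : Type u}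

/-- `T.anc x y` : `x` is an ancestor of `y` (or `x = y`), i.e. `x` lies on the
rooted path to `y`. -/
def anc (T : RTree X) (x y : X) : Prop := ∃ n : ℕ, T.par^[n] y = x

/-- The level of a vertex: its distance to the root. -/
noncomputable def level (T : RTree X) (x : X) : ℕ := sInf {n : ℕ | T.par^[n] x = T.root}

/-- The children of a vertex. -/
def children (T : RTree X) (x : X) : Set X :=
  {y | y ∈ T.verts ∧ T.par y = x ∧ y ≠ x}

/-- The neighbours of a vertex in the tree (its children together with its
parent, if the vertex is not the root); the degree of the vertex is the size
of this set. -/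
def nbhd (T : RTree X) (x : X) : Set X :=
  {y | y ∈ T.verts ∧ ((T.par y = x ∧ y ≠ x) ∨ (T.par x = y ∧ x ≠ y))}

/-- `P` is the vertex set of a (finite or infinite) path of `T` starting at the
root: a nonempty set of vertices closed under taking parents and linearly
ordered by ancestry. -/
def IsRootedPath (T : RTree X) (P : Set X) : Prop :=
  P.Nonempty ∧ P ⊆ T.verts ∧ (∀ x ∈ P, T.par x ∈ P) ∧
    ∀ x ∈ P, ∀ y ∈ P, T.anc x y ∨ T.anc y x

end RTree

/-- `T'` is a subtree of `T`: a rooted tree on a subset of the vertices of `T`,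
with the same root and the same parent relation. -/
def IsSubtree {X : Type u} (T' T : RTree X) : Prop :=
  T'.verts ⊆ T.verts ∧ T'.root = T.root ∧ ∀ x ∈ T'.verts, T'.par x = T.par x

/-- `Q` is a quasi-subtree of `T`: a rooted tree on a subset of the vertices of
`T` preserving the ancestry relation and the levels of `T`. -/
def IsQuasiSubtree {X : Type u} (Q T : RTree X) : Prop :=
  Q.verts ⊆ T.verts ∧
    (∀ x ∈ Q.verts, ∀ y ∈ Q.verts, (Q.anc x y ↔ T.anc x y)) ∧
    ∀ x ∈ Q.verts, ∀ y ∈ Q.verts, (Q.level x = Q.level y ↔ T.level x = T.level y)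

/-- Isomorphism of rooted trees: a bijection of the vertex sets mapping root to
root and commuting with the parent functions. -/
def RTreeIso {X : Type u} {Y : Type u} (T : RTree X) (R : RTree Y) : Prop :=
  ∃ φ : X → Y, Set.BijOn φ T.verts R.verts ∧ φ T.root = R.root ∧
    ∀ x ∈ T.verts, φ (T.par x) = R.par (φ x)

/-- The semigroup `𝒮(T)` of path-bijections of a rooted tree `T`: charts whose
domain and range are vertex sets of rooted paths and which preserve levels. -/
def pathSg {X : Type u} (T : RTree X) : Set (Chart X) :=
  {f | (∃ P, T.IsRootedPath P ∧ Chart.dom f = P) ∧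
    (∃ Q, T.IsRootedPath Q ∧ Chart.ran f = Q) ∧
    ∀ x y : X, (x, y) ∈ f.rel → T.level y = T.level x}

/-!
A branch of the tree `D` can be steered by a sequence of labels from a countable set. Since every
node has infinitely many children, the children chosen for different (node, label) pairs can be
taken distinct, so that the `k`-th point of a branch encodes its first `k + 1` labels.

Let `h` be a partial injection of `ℕ` preserving the blocks of some partition of `ℕ` into finite
intervals. Label `x` by the restriction of `h` and of the partition to everything up to the end of
the block of `x`, and let `β` be the branch with these labels. If `h` maps `i` to `j`, then `β i`
and `β j` determine each other without reference to `h`, because `i` and `j` lie in the same block.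
Hence one chart `u` induces, on every such branch, the corresponding `h`, and conjugating `u` by the
charts `α i ↦ β i` and `β i ↦ α i` shows that `S ∪ {u}` induces `h` on the sequence `α`.

An arbitrary chart is first moved onto the even numbers. One can then choose an increasing sequence
of cuts at most one of which separates `i` from its image, so that each pair of the chart respects
the cuts with even index or those with odd index. Using the odd numbers as intermediate points, the
chart is a product of two charts respecting one of the two families each.
-/

attribute [ext] Chart

theorem InGen.mono {X : Type u} {S T : Set (Chart X)} (hST : S ⊆ T) {f : Chart X}
    (hf : InGen S f) : InGen T f := by
  induction hf with
  | base hf => exact .base (hST hf)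
  | mul _ _ ihf ihg => exact .mul ihf ihg

namespace Chart

section Basic

variable {X : Type*}

theorem mem_mul {f g : Chart X} {x z : X} :
    (x, z) ∈ (f * g).rel ↔ ∃ y, (x, y) ∈ f.rel ∧ (y, z) ∈ g.rel := Iff.rfl

theorem mem_inv {f : Chart X} {x y : X} : (x, y) ∈ f⁻¹.rel ↔ (y, x) ∈ f.rel := Iff.rfl

/-- The chart with full domain given by an injective self-map. -/
def ofInjective (φ : X → X) (hφ : Function.Injective φ) : Chart X where
  rel := {p | φ p.1 = p.2}
  functional _ _ _ h h' := h.symm.trans h'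
  injective _ _ _ h h' := hφ (h.trans h'.symm)

theorem mem_ofInjective {φ : X → X} {hφ : Function.Injective φ} {x y : X} :
    (x, y) ∈ (ofInjective φ hφ).rel ↔ φ x = y := Iff.rfl

/-- The chart obtained from a chart on `X` by renaming the points along an injection. -/
def map {Y : Type*} (f : Chart X) (φ : X → Y) (hφ : Function.Injective φ) : Chart Y where
  rel := Prod.map φ φ '' f.rel
  functional := by
    rintro _ _ _ ⟨⟨x, y⟩, h, ⟨⟩⟩ ⟨⟨x', y'⟩, h', e⟩
    obtain ⟨ex, rfl⟩ := Prod.ext_iff.1 e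
    obtain rfl : x' = x := hφ ex
    exact congrArg φ (f.functional h h')
  injective := by
    rintro _ _ _ ⟨⟨x, y⟩, h, ⟨⟩⟩ ⟨⟨x', y'⟩, h', e⟩
    obtain ⟨rfl, ey⟩ := Prod.ext_iff.1 e
    obtain rfl : y' = y := hφ ey
    exact congrArg φ (f.injective h h')

theorem finite_image (f : Chart X) {s : Set X} (hs : s.Finite) :
    {y | ∃ x ∈ s, (x, y) ∈ f.rel}.Finite := by
  have hunion : {y | ∃ x ∈ s, (x, y) ∈ f.rel} = ⋃ x ∈ s, {y | (x, y) ∈ f.rel} := by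
    ext y
    simp
  rw [hunion]
  exact hs.biUnion fun x _ => Set.Subsingleton.finite fun y hy y' hy' => f.functional hy hy'

theorem exists_mul_eq_of_injOn (f : Chart X) (m : X × X → X) (hm : InjOn m f.rel) :
    ∃ c d : Chart X, c.rel = (fun p => (p.1, m p)) '' f.rel ∧
      d.rel = (fun p => (m p, p.2)) '' f.rel ∧ c * d = f := by
  refine ⟨⟨(fun p => (p.1, m p)) '' f.rel, ?_, ?_⟩, ⟨(fun p => (m p, p.2)) '' f.rel, ?_, ?_⟩,
    rfl, rfl, ?_⟩
  · rintro _ _ _ ⟨⟨x, y⟩, h, ⟨⟩⟩ ⟨⟨x', y'⟩, h', e⟩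
    obtain ⟨rfl, rfl⟩ := Prod.ext_iff.1 e
    rw [f.functional h h']
  · rintro _ _ _ ⟨p, h, ⟨⟩⟩ ⟨q, h', e⟩
    obtain ⟨rfl, e⟩ := Prod.ext_iff.1 e
    rw [hm h h' e.symm]
  · rintro _ _ _ ⟨p, h, ⟨⟩⟩ ⟨q, h', e⟩
    obtain ⟨e, rfl⟩ := Prod.ext_iff.1 e
    rw [hm h h' e.symm]
  · rintro _ _ _ ⟨⟨x, y⟩, h, ⟨⟩⟩ ⟨⟨x', y'⟩, h', e⟩
    obtain ⟨rfl, rfl⟩ := Prod.ext_iff.1 e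
    rw [f.injective h h']
  · ext ⟨x, z⟩
    constructor
    · rintro ⟨_, ⟨p, hp, ⟨⟩⟩, ⟨q, hq, e⟩⟩
      obtain ⟨e, rfl⟩ := Prod.ext_iff.1 e
      obtain rfl := hm hq hp e
      exact hp
    · intro h
      exact ⟨m (x, z), ⟨_, h, rfl⟩, ⟨_, h, rfl⟩⟩

end Basic

section Simulates

variable {I J X : Type*}

/-- The chart `w` induces the chart `h` on the points indexed by `γ`: a point `γ i` lies in the
domain of `w` exactly when `i` lies in the domain of `h`, and is then mapped to `γ (i h)`. -/
def Simulates (w : Chart X) (γ : I → X) (h : Chart I) : Prop :=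
  ∀ i y, (γ i, y) ∈ w.rel ↔ ∃ j, (i, j) ∈ h.rel ∧ γ j = y

theorem simulates_map {φ : I → X} (hφ : Function.Injective φ) (h : Chart I) :
    (h.map φ hφ).Simulates φ h := by
  intro i y
  constructor
  · rintro ⟨⟨i', j⟩, hij, e⟩
    obtain ⟨ei, rfl⟩ := Prod.ext_iff.1 e
    obtain rfl := hφ ei
    exact ⟨j, hij, rfl⟩
  · rintro ⟨j, hij, rfl⟩
    exact ⟨_, hij, rfl⟩

theorem Simulates.comp {w : Chart X} {γ : J → X} {h : Chart J} {ν : I → J} {f : Chart I}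
    (hw : w.Simulates γ h) (hh : h.Simulates ν f) : w.Simulates (γ ∘ ν) f := by
  intro i y
  simp only [Function.comp_apply, hw _ _, hh _ _]
  constructor
  · rintro ⟨_, ⟨k, hk, rfl⟩, hy⟩
    exact ⟨k, hk, hy⟩
  · rintro ⟨k, hk, hy⟩
    exact ⟨_, ⟨k, hk, rfl⟩, hy⟩

theorem Simulates.mul {w v : Chart X} {γ : I → X} {c d : Chart I}
    (hw : w.Simulates γ c) (hv : v.Simulates γ d) : (w * v).Simulates γ (c * d) := by
  intro i y
  simp only [mem_mul, hw _ _]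
  constructor
  · rintro ⟨_, ⟨k, hk, rfl⟩, hy⟩
    obtain ⟨j, hj, rfl⟩ := (hv _ _).1 hy
    exact ⟨j, ⟨k, hk, hj⟩, rfl⟩
  · rintro ⟨j, ⟨k, hk, hj⟩, rfl⟩
    exact ⟨_, ⟨k, hk, rfl⟩, (hv _ _).2 ⟨j, hj, rfl⟩⟩

theorem Simulates.conj {u g g' : Chart X} {α β : I → X} {h : Chart I} (hu : u.Simulates β h)
    (hg : ∀ i, (α i, β i) ∈ g.rel) (hg' : ∀ i, (β i, α i) ∈ g'.rel) :
    (g * u * g').Simulates α h := by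
  intro i y
  constructor
  · rintro ⟨_, ⟨b, hb, hbu⟩, hy⟩
    obtain rfl := g.functional (hg i) hb
    obtain ⟨j, hij, rfl⟩ := (hu _ _).1 hbu
    exact ⟨j, hij, g'.functional (hg' j) hy⟩
  · rintro ⟨j, hij, rfl⟩
    exact ⟨β j, ⟨β i, hg i, (hu _ _).2 ⟨j, hij, rfl⟩⟩, hg' j⟩

theorem Simulates.conj_ofInjective_eq {w : Chart X} {γ : X → X} {f : Chart X}
    (hw : w.Simulates γ f) (hγ : Function.Injective γ) :
    ofInjective γ hγ * w * (ofInjective γ hγ)⁻¹ = f := by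
  ext ⟨x, z⟩
  simp only [mem_mul, mem_inv, mem_ofInjective, exists_eq_left', exists_eq_right', hw _ _,
    hγ.eq_iff, exists_eq_right]

end Simulates

end Chart

section Branches

theorem exists_injective_forall_mem_of_infinite {ι X : Type*} [Countable ι] (A : ι → Set X)
    (hA : ∀ i, (A i).Infinite) : ∃ x : ι → X, Function.Injective x ∧ ∀ i, x i ∈ A i := by
  classical
  obtain ⟨c, hc⟩ := exists_injective_nat ι
  choose t htA htc using fun i => (hA i).exists_subset_card_eq (c i + 1)
  have hall : ∀ s : Finset ι, s.card ≤ (s.biUnion t).card := by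
    intro s
    rcases s.eq_empty_or_nonempty with rfl | hs
    · simp
    obtain ⟨i, hi, hmax⟩ := s.exists_max_image c hs
    calc s.card ≤ (Finset.range (c i + 1)).card :=
          Finset.card_le_card_of_injOn c
            (fun j hj => Finset.mem_coe.2 (Finset.mem_range_succ_iff.2 (hmax j hj))) hc.injOn
      _ = (t i).card := by rw [Finset.card_range, htc]
      _ ≤ (s.biUnion t).card := Finset.card_le_card (Finset.subset_biUnion_of_mem t hi)
  obtain ⟨x, hx, hxt⟩ := (Finset.all_card_le_biUnion_card_iff_exists_injective t).1 hall
  exact ⟨x, hx, fun i => htA i (hxt i)⟩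

variable {X L : Type*} {D : (i : ℕ) → Set (Fin i → X)} (root : D 0) {c : (Σ i, D i) → L → X}
  (hc : ∀ v a, Fin.snoc (α := fun _ => X) v.2.1 (c v a) ∈ D (v.1 + 1))

/-- The node at height `k` of the branch of the tree `D` steered by the labels `n`, where `c v a`
is the child of the node `v` chosen for the label `a`. -/
def branchNode (n : ℕ → L) : (k : ℕ) → D k
  | 0 => root
  | k + 1 => ⟨_, hc ⟨k, branchNode n k⟩ (n k)⟩

/-- The sequence of points along the branch of the tree `D` steered by the labels `n`. -/
def branch (n : ℕ → L) (k : ℕ) : X := c ⟨k, branchNode root hc n k⟩ (n k)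

theorem branchNode_apply (n : ℕ → L) (k : ℕ) (j : Fin k) :
    (branchNode root hc n k).1 j = branch root hc n j := by
  induction k with
  | zero => exact j.elim0
  | succ k ih =>
    cases j using Fin.lastCases with
    | last => simp [branchNode, branch]
    | cast j => simp [branchNode, ih]

theorem branch_mem (n : ℕ → L) (k : ℕ) : (fun j : Fin k => branch root hc n j) ∈ D k := by
  convert (branchNode root hc n k).2 using 1
  funext j
  exact (branchNode_apply root hc n k j).symm

theorem branchNode_congr {n n' : ℕ → L} {k : ℕ} (h : ∀ x < k, n x = n' x) :
    branchNode root hc n k = branchNode root hc n' k := by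
  induction k with
  | zero => rfl
  | succ k ih =>
    simp only [branchNode, ih fun x hx => h x (hx.trans k.lt_succ_self), h k k.lt_succ_self]

theorem branch_eq_branch_iff (hinj : Function.Injective2 c) {n n' : ℕ → L} {k l : ℕ} :
    branch root hc n k = branch root hc n' l ↔ k = l ∧ ∀ x ≤ k, n x = n' x := by
  constructor
  · intro h
    obtain ⟨hnode, hlabel⟩ := hinj h
    obtain ⟨rfl, hnode⟩ := Sigma.mk.inj_iff.1 hnode
    refine ⟨rfl, fun x hx => ?_⟩
    rcases hx.lt_or_eq with hx | rfl
    · have hpoint : branch root hc n x = branch root hc n' x := by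
        simpa only [branchNode_apply] using
          congrFun (congrArg Subtype.val (eq_of_heq hnode)) ⟨x, hx⟩
      exact (hinj hpoint).2
    · exact hlabel
  · rintro ⟨rfl, h⟩
    simp only [branch, branchNode_congr root hc fun x hx => h x hx.le, h k le_rfl]

end Branches

theorem exists_labelled_branches {X L : Type*} [Countable X] [Countable L]
    {D : (i : ℕ) → Set (Fin i → X)} (hroot : (D 0).Nonempty)
    (hchildren : ∀ (i : ℕ) (β : Fin i → X), β ∈ D i →
      {b : X | Fin.snoc (α := fun _ => X) β b ∈ D (i + 1)}.Infinite) :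
    ∃ β : (ℕ → L) → ℕ → X, (∀ n i, (fun j : Fin i => β n j) ∈ D i) ∧
      ∀ n n' k l, β n k = β n' l ↔ k = l ∧ ∀ x ≤ k, n x = n' x := by
  obtain ⟨c, hinj, hc⟩ := exists_injective_forall_mem_of_infinite
    (fun p : (Σ i, D i) × L => {b : X | Fin.snoc (α := fun _ => X) p.1.2.1 b ∈ D (p.1.1 + 1)})
    fun p => hchildren _ _ p.1.2.2
  let root : D 0 := ⟨hroot.some, hroot.some_mem⟩
  have hc' : ∀ v a, Fin.snoc (α := fun _ => X) v.2.1 (c (v, a)) ∈ D (v.1 + 1) :=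
    fun v a => hc (v, a)
  exact ⟨branch (c := fun v a => c (v, a)) root hc', branch_mem root hc',
    fun n n' k l => branch_eq_branch_iff root hc' fun _ _ _ _ h => Prod.ext_iff.1 (hinj h)⟩

section Blocks

/-- Two numbers lie in the same block of the partition of `ℕ` into intervals with set of
cuts `C`, a cut at `k` separating the numbers `< k` from the numbers `≥ k`. -/
def SameBlock (C : Set ℕ) (i j : ℕ) : Prop := ∀ k ∈ C, i < k ↔ j < k

/-- Each point in the domain of `h` is mapped to a point of the same block. -/
def Chart.Respects (h : Chart ℕ) (C : Set ℕ) : Prop := ∀ ⦃i j⦄, (i, j) ∈ h.rel → SameBlock C i j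

/-- The first cut above `x`, i.e. the end of the block of `x`. It is only meaningful for
infinite `C`. -/
noncomputable def nextCut (C : Set ℕ) (x : ℕ) : ℕ := sInf {k ∈ C | x < k}

open Classical in
/-- The label of `x` for a chart respecting the cuts `C`: the restriction of the chart and of the
set of cuts to everything up to the end of the block of `x`. -/
noncomputable def blockLabel (h : Chart ℕ) (C : Set ℕ) (x : ℕ) :
    ℕ × Finset ℕ × Finset (ℕ × ℕ) :=
  let K := nextCut C x
  (K, {k ∈ Finset.Iic K | k ∈ C}, {p ∈ Finset.Iio K ×ˢ Finset.Iio K | p ∈ h.rel})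

variable {C C' : Set ℕ} {h h' : Chart ℕ} {x y i j k : ℕ}

theorem nextCut_mem_and_lt (hC : C.Infinite) (x : ℕ) : nextCut C x ∈ C ∧ x < nextCut C x :=
  Nat.sInf_mem (hC.exists_gt x)

theorem nextCut_le_of_lt_nextCut (hC : C.Infinite) (hy : y < nextCut C x) :
    nextCut C y ≤ nextCut C x :=
  Nat.sInf_le ⟨(nextCut_mem_and_lt hC x).1, hy⟩

theorem SameBlock.refl (C : Set ℕ) (i : ℕ) : SameBlock C i i := fun _ _ => Iff.rfl

theorem SameBlock.symm (hij : SameBlock C i j) : SameBlock C j i := fun k hk => (hij k hk).symm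

theorem SameBlock.trans (hij : SameBlock C i j) (hjk : SameBlock C j k) : SameBlock C i k :=
  fun l hl => (hij l hl).trans (hjk l hl)

theorem SameBlock.succ_left (hC : ∀ k ∈ C, Even k) (hj : Even j) :
    SameBlock C (j + 1) j := by
  intro k hk
  have := hC k hk
  grind

theorem SameBlock.nextCut_eq (hij : SameBlock C i j) : nextCut C i = nextCut C j :=
  congrArg sInf (Set.ext fun k => and_congr_right (hij k))

theorem blockLabel_eq_blockLabel_iff : blockLabel h C x = blockLabel h' C' y ↔
    nextCut C x = nextCut C' y ∧ (∀ k ≤ nextCut C x, k ∈ C ↔ k ∈ C') ∧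
      ∀ i < nextCut C x, ∀ j < nextCut C x, (i, j) ∈ h.rel ↔ (i, j) ∈ h'.rel := by
  simp only [blockLabel, Prod.mk.injEq]
  refine and_congr_right fun hK => ?_
  rw [← hK]
  simp only [Finset.ext_iff, Finset.mem_filter, Finset.mem_Iic, Finset.mem_product, Finset.mem_Iio,
    Prod.forall, and_congr_right_iff, and_imp]
  grind

theorem nextCut_eq_nextCut_of_lt (hC : C.Infinite) (hx : ∀ k ≤ nextCut C x, k ∈ C ↔ k ∈ C')
    (hy : y < nextCut C x) : nextCut C y = nextCut C' y := by
  have hle := nextCut_le_of_lt_nextCut hC hy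
  obtain ⟨hmem, hlt⟩ := nextCut_mem_and_lt hC y
  have hle' : nextCut C' y ≤ nextCut C y := Nat.sInf_le ⟨(hx _ hle).1 hmem, hlt⟩
  have hC'y : nextCut C' y ∈ {k ∈ C' | y < k} := Nat.sInf_mem ⟨_, (hx _ hle).1 hmem, hlt⟩
  exact le_antisymm (Nat.sInf_le ⟨(hx _ (hle'.trans hle)).2 hC'y.1, hC'y.2⟩) hle'

theorem blockLabel_eq_blockLabel_of_lt (hC : C.Infinite)
    (hx : blockLabel h C x = blockLabel h' C' x) (hy : y < nextCut C x) :
    blockLabel h C y = blockLabel h' C' y := by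
  obtain ⟨-, hcuts, hcharts⟩ := blockLabel_eq_blockLabel_iff.1 hx
  have hle := nextCut_le_of_lt_nextCut hC hy
  exact blockLabel_eq_blockLabel_iff.2 ⟨nextCut_eq_nextCut_of_lt hC hcuts hy,
    fun k hk => hcuts k (hk.trans hle),
    fun i hi j hj => hcharts i (hi.trans_le hle) j (hj.trans_le hle)⟩

variable {X : Type*} {β : (ℕ → ℕ × Finset ℕ × Finset (ℕ × ℕ)) → ℕ → X}

theorem branch_blockLabel_transfer
    (hβ : ∀ n n' k l, β n k = β n' l ↔ k = l ∧ ∀ x ≤ k, n x = n' x) (hC : C.Infinite)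
    (hbranch : β (blockLabel h C) x = β (blockLabel h' C') y) :
    x = y ∧ ∀ z, SameBlock C x z → β (blockLabel h C) z = β (blockLabel h' C') z ∧
      ((x, z) ∈ h.rel ↔ (x, z) ∈ h'.rel) ∧ ((z, x) ∈ h.rel ↔ (z, x) ∈ h'.rel) := by
  obtain ⟨rfl, hlabels⟩ := (hβ _ _ _ _).1 hbranch
  refine ⟨rfl, fun z hz => ?_⟩
  have hlabel := hlabels x le_rfl
  have hx : x < nextCut C x := (nextCut_mem_and_lt hC x).2
  have hzx : z < nextCut C x := hz.nextCut_eq ▸ (nextCut_mem_and_lt hC z).2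
  obtain ⟨-, -, hcharts⟩ := blockLabel_eq_blockLabel_iff.1 hlabel
  exact ⟨(hβ _ _ _ _).2
    ⟨rfl, fun w hw => blockLabel_eq_blockLabel_of_lt hC hlabel (hw.trans_lt hzx)⟩,
    hcharts x hx z hzx, hcharts z hzx x hx⟩

theorem exists_chart_simulates_respects
    (hβ : ∀ n n' k l, β n k = β n' l ↔ k = l ∧ ∀ x ≤ k, n x = n' x) :
    ∃ u : Chart X, ∀ (h : Chart ℕ) (C : Set ℕ), C.Infinite → h.Respects C →
      u.Simulates (β (blockLabel h C)) h := by
  let u : Chart X :=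
    { rel := {p | ∃ (h : Chart ℕ) (C : Set ℕ) (i j : ℕ), C.Infinite ∧ h.Respects C ∧
        (i, j) ∈ h.rel ∧ p = (β (blockLabel h C) i, β (blockLabel h C) j)}
      functional := by
        rintro _ _ _ ⟨h, C, i, j, hC, hh, hij, ⟨⟩⟩ ⟨h', C', i', j', -, -, hij', e⟩
        obtain ⟨hi, rfl⟩ := Prod.ext_iff.1 e
        obtain ⟨rfl, htransfer⟩ := branch_blockLabel_transfer hβ hC hi
        obtain ⟨hj, hiff, -⟩ := htransfer j (hh hij)
        rw [hj, h'.functional (hiff.1 hij) hij']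
      injective := by
        rintro _ _ _ ⟨h, C, i, j, hC, hh, hij, ⟨⟩⟩ ⟨h', C', i', j', -, -, hij', e⟩
        obtain ⟨rfl, hj⟩ := Prod.ext_iff.1 e
        obtain ⟨rfl, htransfer⟩ := branch_blockLabel_transfer hβ hC hj
        obtain ⟨hi, -, hiff⟩ := htransfer i (hh hij).symm
        rw [hi, h'.injective (hiff.1 hij) hij'] }
  refine ⟨u, fun h C hC hh i y => ⟨?_, ?_⟩⟩
  · rintro ⟨h', C', i', j, hC', hh', hij, e⟩
    obtain ⟨hi, rfl⟩ := Prod.ext_iff.1 e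
    obtain ⟨rfl, htransfer⟩ := branch_blockLabel_transfer hβ hC' hi.symm
    obtain ⟨hj, hiff, -⟩ := htransfer j (hh' hij)
    exact ⟨j, hiff.1 hij, hj.symm⟩
  · rintro ⟨j, hij, rfl⟩
    exact ⟨h, C, i, j, hC, hh, hij, rfl⟩

end Blocks

namespace Chart

theorem eventually_image_lt (f : Chart ℕ) (N : ℕ) :
    ∀ᶠ M in Filter.atTop, ∀ i j, (i, j) ∈ f.rel → i < N → j < M := by
  obtain ⟨B, hB⟩ := (f.finite_image (finite_Iio N)).bddAbove
  filter_upwards [Filter.eventually_gt_atTop B] with M hM i j hij hi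
  exact (hB ⟨i, hi, hij⟩).trans_lt hM

theorem exists_even_cuts (f : Chart ℕ) : ∃ w : ℕ → ℕ, StrictMono w ∧ (∀ k, Even (w k)) ∧
    ∀ m n, m < n → ∀ i j, (i, j) ∈ f.rel → (i < w m → j < w n) ∧ (j < w m → i < w n) := by
  obtain ⟨w, heven, hw⟩ := exists_seq_of_forall_finset_exists Even
    (fun N M => N < M ∧ ∀ i j, (i, j) ∈ f.rel → (i < N → j < M) ∧ (j < N → i < M)) (by
      intro s _
      have hlarge : ∀ᶠ M in Filter.atTop, ∀ N ∈ s, N < M ∧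
          ∀ i j, (i, j) ∈ f.rel → (i < N → j < M) ∧ (j < N → i < M) := by
        rw [Filter.eventually_all_finset]
        intro N _
        filter_upwards [Filter.eventually_gt_atTop N, f.eventually_image_lt N,
          f⁻¹.eventually_image_lt N] with M hM himage hpreimage
        exact ⟨hM, fun i j hij => ⟨himage i j hij, hpreimage j i hij⟩⟩
      exact (Nat.frequently_even.and_eventually hlarge).exists)
  exact ⟨w, fun m n hmn => (hw m n hmn).1, heven, fun m n hmn => (hw m n hmn).2⟩

end Chart

theorem sameBlock_even_or_odd {w : ℕ → ℕ} (hw : StrictMono w) {i j : ℕ}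
    (hij : ∀ m n, m < n → (i < w m → j < w n) ∧ (j < w m → i < w n)) :
    SameBlock (range fun k => w (2 * k)) i j ∨ SameBlock (range fun k => w (2 * k + 1)) i j := by
  have hone : ∀ m n, m < n → (i < w m ↔ j < w m) ∨ (i < w n ↔ j < w n) := by
    intro m n hmn
    have := hij m n hmn
    have := hw hmn
    omega
  by_contra! hsep
  simp only [SameBlock, forall_mem_range, not_forall] at hsep
  obtain ⟨⟨a, ha⟩, b, hb⟩ := hsep
  rcases Nat.lt_or_gt_of_ne (show 2 * a ≠ 2 * b + 1 by omega) with hlt | hlt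
  · exact (hone _ _ hlt).elim ha hb
  · exact (hone _ _ hlt).elim hb ha

open Classical in
theorem Chart.exists_respects_mul_eq_of_sameBlock_or {f : Chart ℕ} {C D : Set ℕ}
    (heven : ∀ i j, (i, j) ∈ f.rel → Even i ∧ Even j) (hC : ∀ k ∈ C, Even k)
    (hD : ∀ k ∈ D, Even k) (hCD : ∀ i j, (i, j) ∈ f.rel → SameBlock C i j ∨ SameBlock D i j) :
    ∃ c d : Chart ℕ, c.Respects C ∧ d.Respects D ∧ c * d = f := by
  let m : ℕ × ℕ → ℕ := fun p => if SameBlock C p.1 p.2 then p.2 + 1 else p.1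
  have hm : InjOn m f.rel := by
    rintro ⟨i, j⟩ hij ⟨i', j'⟩ hij' e
    have := heven i j hij
    have := heven i' j' hij'
    have hj : j = j' → i = i' := by rintro rfl; exact f.injective hij hij'
    have hi : i = i' → j = j' := by rintro rfl; exact f.functional hij hij'
    simp only [m] at e
    grind
  obtain ⟨c, d, hc, hd, hcd⟩ := f.exists_mul_eq_of_injOn m hm
  refine ⟨c, d, ?_, ?_, hcd⟩
  · intro i k hik
    rw [hc] at hik
    obtain ⟨⟨i, j⟩, hij, ⟨⟩⟩ := hik
    by_cases hblock : SameBlock C i j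
    · simpa only [m, hblock, if_true] using
        hblock.trans (SameBlock.succ_left hC (heven i j hij).2).symm
    · simpa only [m, hblock, if_false] using SameBlock.refl C i
  · intro k j hkj
    rw [hd] at hkj
    obtain ⟨⟨i, j⟩, hij, ⟨⟩⟩ := hkj
    by_cases hblock : SameBlock C i j
    · simpa only [m, hblock, if_true] using SameBlock.succ_left hD (heven i j hij).2
    · simpa only [m, hblock, if_false] using (hCD i j hij).resolve_left hblock

theorem Chart.exists_respects_mul_eq (f : Chart ℕ)
    (heven : ∀ i j, (i, j) ∈ f.rel → Even i ∧ Even j) :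
    ∃ (c d : Chart ℕ) (C D : Set ℕ), C.Infinite ∧ D.Infinite ∧ c.Respects C ∧ d.Respects D ∧
      c * d = f := by
  obtain ⟨w, hw, hweven, hwf⟩ := f.exists_even_cuts
  obtain ⟨c, d, hc, hd, hcd⟩ := exists_respects_mul_eq_of_sameBlock_or heven
    (forall_mem_range.2 fun k => hweven (2 * k)) (forall_mem_range.2 fun k => hweven (2 * k + 1))
    fun i j hij => sameBlock_even_or_odd hw fun a b hab => hwf a b hab i j hij
  exact ⟨c, d, _, _, infinite_range_of_injective (hw.injective.comp fun a b h => by omega),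
    infinite_range_of_injective (hw.injective.comp fun a b h => by omega), hc, hd, hcd⟩

theorem exists_chart_forall_respects_simulates {X : Type u} [Countable X] {S : Set (Chart X)}
    {α : ℕ → X} {D : (i : ℕ) → Set (Fin i → X)} (hroot : (D 0).Nonempty)
    (hchildren : ∀ (i : ℕ) (β : Fin i → X), β ∈ D i →
      {b : X | Fin.snoc β b ∈ D (i + 1)}.Infinite)
    (hS : ∀ β : ℕ → X, (∀ i : ℕ, (fun j : Fin i => β j.1) ∈ D i) →
      ∃ g ∈ S, ∃ g' ∈ S, ∀ i : ℕ, (α i, β i) ∈ g.rel ∧ (β i, α i) ∈ g'.rel) :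
    ∃ u : Chart X, ∀ (h : Chart ℕ) (C : Set ℕ), C.Infinite → h.Respects C →
      ∃ w ∈ Sgen (S ∪ {u}), w.Simulates α h := by
  obtain ⟨β, hβD, hβ⟩ := exists_labelled_branches (L := ℕ × Finset ℕ × Finset (ℕ × ℕ))
    hroot hchildren
  obtain ⟨u, hu⟩ := exists_chart_simulates_respects hβ
  refine ⟨u, fun h C hC hh => ?_⟩
  obtain ⟨g, hg, g', hg', hgg'⟩ := hS _ (hβD (blockLabel h C))
  exact ⟨g * u * g', .mul (.mul (.base (.inl hg)) (.base (.inr rfl))) (.base (.inl hg')),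
    (hu h C hC hh).conj (fun i => (hgg' i).1) fun i => (hgg' i).2⟩

theorem bsEquiv_univ_of_forall_respects {X : Type u} [Countable X] {S : Set (Chart X)} {α : ℕ → X}
    (hα : Function.Injective α) (u : Chart X)
    (hu : ∀ (h : Chart ℕ) (C : Set ℕ), C.Infinite → h.Respects C →
      ∃ w ∈ Sgen (S ∪ {u}), w.Simulates α h) :
    BSequiv S (univ : Set (Chart X)) := by
  obtain ⟨e, he⟩ := exists_injective_nat X
  have hν : Function.Injective fun x => 2 * e x := fun x y hxy => he (by simpa using hxy)
  let δ := Chart.ofInjective _ (hα.comp hν)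
  refine ⟨⟨∅, countable_empty, fun f _ => .base (.inl (mem_univ f))⟩,
    {u, δ, δ⁻¹}, by simp, fun f _ => ?_⟩
  obtain ⟨c, d, C, D, hC, hD, hc, hd, hcd⟩ := (f.map _ hν).exists_respects_mul_eq (by
    rintro _ _ ⟨p, -, ⟨⟩⟩
    exact ⟨even_two_mul _, even_two_mul _⟩)
  obtain ⟨w, hw, hwc⟩ := hu c C hC hc
  obtain ⟨v, hv, hvd⟩ := hu d D hD hd
  have hwv : (w * v).Simulates _ f := (hcd ▸ hwc.mul hvd).comp (Chart.simulates_map hν f)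
  rw [← hwv.conj_ofInjective_eq (hα.comp hν)]
  have hsub : S ∪ {u} ⊆ S ∪ {u, δ, δ⁻¹} := union_subset_union_right S (by simp)
  exact .mul (.mul (.base (by simp [δ])) (.mul (hw.mono hsub) (hv.mono hsub))) (.base (by simp [δ]))

theorem stmt7_general {X : Type u} [Countable X] (S : Set (Chart X))
    (α : ℕ → X) (hα : Function.Injective α)
    (D : (i : ℕ) → Set (Fin i → X)) (hne : (D 0).Nonempty)
    (h2 : ∀ (i : ℕ) (β : Fin i → X), β ∈ D i →
      {b : X | Fin.snoc β b ∈ D (i + 1)}.Infinite)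
    (h3 : ∀ β : ℕ → X, (∀ i : ℕ, (fun j : Fin i => β j.1) ∈ D i) →
      ∃ g ∈ S, ∃ g' ∈ S, ∀ i : ℕ, (α i, β i) ∈ g.rel ∧ (β i, α i) ∈ g'.rel) :
    BSequiv S (Set.univ : Set (Chart X)) := by
  obtain ⟨u, hu⟩ := exists_chart_forall_respects_simulates hne h2 h3
  exact bsEquiv_univ_of_forall_respects hα u hu

/-- analogue of Bergman–Shelah Lemma 10: under the stated hypotheses
on the sequence `α`, the sets `D i` and the subsemigroup `S` of `I_X`,
we get `S ≈ I_X`. -/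
theorem stmt7 {X : Type u} [Countable X] [Infinite X] (S : Set (Chart X))
    (hS : IsSubsemigroup S)
    (α : ℕ → X) (hα : Function.Injective α)
    (D : (i : ℕ) → Set (Fin i → X)) (hne : ∀ i, (D i).Nonempty)
    (h1 : ∀ (i : ℕ) (β : Fin (i + 1) → X), β ∈ D (i + 1) → Fin.init β ∈ D i)
    (h2 : ∀ (i : ℕ) (β : Fin i → X), β ∈ D i →
      {b : X | Fin.snoc β b ∈ D (i + 1)}.Infinite)
    (h3 : ∀ β : ℕ → X, (∀ i : ℕ, (fun j : Fin i => β j.1) ∈ D i) →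
      ∃ g ∈ S, ∃ g' ∈ S, ∀ i : ℕ, (α i, β i) ∈ g.rel ∧ (β i, α i) ∈ g'.rel) :
    BSequiv S (Set.univ : Set (Chart X)) :=
  stmt7_general S α hα D (hne 0) h2 h3
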